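/- arXiv:1705.00968 — 2 statements merged into one kernel-verified Lean document; each statement's English description precedes it below -/
import Mathlib

section
/- Let r ≥ 1, N ≥ 1 be integers and K : Fin N → Fin r → ℕ an exponent matrix whose rows are pairwise distinct and each of whose rows has positive sum, and let ρ be the rank of K regarded as a real N×r matrix. If k is a positive integer with k·ρ < N, then the special integral θ_k of the multidimensional Tarry problem diverges, i.e. the function α ↦ |∫_{[0,1]^r} exp(2πi·Σ_{j} α_j ∏_i x_i^{K j i}) dx|^{2k} is not Lebesgue integrable on ℝ^N. -/
open MeasureTheory

/-- The integrand of the special integral of the multidimensional Tarry problem: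
`α ↦ |∫_{[0,1]^r} exp(2πi Σ_j α_j Π_i x_i^{K j i}) dx|^{2k}`. -/
noncomputable def tarryIntegrand (r N : ℕ) (K : Fin N → Fin r → ℕ) (k : ℕ)
    (α : Fin N → ℝ) : ℝ :=
  ‖∫ x in Set.Icc (0 : Fin r → ℝ) 1,
      Complex.exp (2 * Real.pi * Complex.I *
        ((∑ j : Fin N, α j * ∏ i : Fin r, x i ^ K j i : ℝ) : ℂ))‖ ^ (2 * k)

open scoped FourierTransform SchwartzMap ContDiff ENNReal in
lemma tarry_pairing {V : Type*} [NormedAddCommGroup V] [InnerProductSpace ℝ V]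
    [FiniteDimensional ℝ V] [MeasurableSpace V] [BorelSpace V] (ν : Measure V)
    [IsFiniteMeasure ν] (φ : 𝓢(V, ℂ)) :
    ∫ x, φ x ∂ν = ∫ α, (∫ x, ((Real.fourierChar (inner ℝ α x) : Circle) : ℂ) ∂ν) * 𝓕 φ α := by
  have h1 : ∀ x, φ x = ∫ α, ((Real.fourierChar (inner ℝ α x) : Circle) : ℂ) * 𝓕 φ α := by
    intro x
    have h2 : 𝓕⁻ (𝓕 φ) x = φ x := by
      rw [FourierTransform.fourierInv_fourier_eq]
    rw [← h2, SchwartzMap.fourierInv_coe, Real.fourierInv_eq]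
    simp only [Circle.smul_def, smul_eq_mul]
  simp_rw [← integral_mul_const]
  rw [integral_integral_swap]
  · exact integral_congr_ae (Filter.Eventually.of_forall h1)
  · have hi : Integrable (fun p : V × V => 𝓕 φ p.1) (volume.prod ν) :=
      ((𝓕 φ).integrable (μ := volume)).comp_fst ν
    refine hi.mono ?_ ?_
    · apply Continuous.aestronglyMeasurable
      have := (𝓕 φ).continuous
      simp only [Function.uncurry_def]
      fun_prop
    · exact Filter.Eventually.of_forall fun p => by
        simp only [Function.uncurry_def, norm_mul, Circle.norm_coe, one_mul, le_refl]

open scoped FourierTransform SchwartzMap ContDiff ENNReal in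
lemma tarry_bound {V : Type*} [NormedAddCommGroup V] [InnerProductSpace ℝ V]
    [FiniteDimensional ℝ V] [MeasurableSpace V] [BorelSpace V] (ν : Measure V)
    [IsFiniteMeasure ν] (φ : 𝓢(V, ℂ)) (t : ℝ) (ht : 0 < t)
    (hint : Integrable (fun α => ‖∫ x, ((Real.fourierChar (inner ℝ α x) : Circle) : ℂ) ∂ν‖ ^ 2)) :
    ‖∫ x, φ x ∂ν‖ ≤ ((∫ α, ‖∫ x, ((Real.fourierChar (inner ℝ α x) : Circle) : ℂ) ∂ν‖ ^ 2) / t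
      + t * ∫ x, ‖φ x‖ ^ 2) / 2 := by
  rw [tarry_pairing, ← SchwartzMap.integral_norm_sq_fourier φ]
  have hφ : Integrable (fun α => ‖𝓕 φ α‖ ^ 2) := ((𝓕 φ).memLp 2).integrable_norm_pow (by simp)
  refine (norm_integral_le_integral_norm _).trans ?_
  rw [← integral_const_mul, ← integral_div, ← integral_add (hint.div_const t) (hφ.const_mul t),
    ← integral_div]
  refine integral_mono_of_nonneg (Filter.Eventually.of_forall fun _ => norm_nonneg _)
    (((hint.div_const t).add (hφ.const_mul t)).div_const 2)
    (Filter.Eventually.of_forall fun α => ?_)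
  simp only [norm_mul]
  set a := ‖∫ x, ((Real.fourierChar (inner ℝ α x) : Circle) : ℂ) ∂ν‖
  set b := ‖𝓕 φ α‖
  have : (a ^ 2 / t + t * b ^ 2) / 2 - a * b = (a - t * b) ^ 2 / (2 * t) := by
    field_simp
    ring
  have h3 : 0 ≤ (a - t * b) ^ 2 / (2 * t) := by positivity
  linarith

open scoped FourierTransform SchwartzMap ContDiff ENNReal Manifold in
lemma tarry_ac {V : Type*} [NormedAddCommGroup V] [InnerProductSpace ℝ V]
    [FiniteDimensional ℝ V] [MeasurableSpace V] [BorelSpace V] (ν : Measure V)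
    [IsProbabilityMeasure ν] (S : Set V) (hS : volume S = 0) (hνS : ∀ᵐ x ∂ν, x ∈ S)
    (hint : Integrable (fun α => ‖∫ x, ((Real.fourierChar (inner ℝ α x) : Circle) : ℂ) ∂ν‖ ^ 2)) :
    False := by
  set C := ∫ α, ‖∫ x, ((Real.fourierChar (inner ℝ α x) : Circle) : ℂ) ∂ν‖ ^ 2 with hC
  have hC0 : 0 ≤ C := integral_nonneg fun _ => by positivity
  set t : ℝ := 2 * C + 1 with ht
  have ht0 : 0 < t := by positivity
  obtain ⟨U, hSU, hUo, hU⟩ := Set.exists_isOpen_lt_of_lt S (ENNReal.ofReal (1 / (4 * t)))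
    (by rw [hS]; simpa using ht0)
  have hνU : ν U = 1 := by
    rw [prob_compl_eq_zero_iff hUo.measurableSet |>.symm]
    exact measure_mono_null (fun x hx hxS => hx (hSU hxS)) (ae_iff.1 hνS)
  obtain ⟨T, hTU, hT, hνT⟩ := hUo.exists_lt_isCompact (μ := ν) (r := ENNReal.ofReal (3/4))
    (by rw [hνU, ← ENNReal.ofReal_one]; exact (ENNReal.ofReal_lt_ofReal_iff one_pos).2 (by norm_num))
  obtain ⟨L, hL, hTL, hLU⟩ := exists_compact_between hT hUo hTU
  obtain ⟨f, hf, hfr, hfs, hfT⟩ := exists_contMDiff_support_eq_eq_one_iff (n := (⊤ : ℕ∞)) 𝓘(ℝ, V)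
    isOpen_interior hT.isClosed hTL
  have hf' : ContDiff ℝ ∞ f := hf.contDiff
  have hf01 : ∀ x, 0 ≤ f x ∧ f x ≤ 1 := fun x => hfr ⟨x, rfl⟩
  have hfL : ∀ x, x ∉ L → f x = 0 := fun x hx => by
    by_contra h
    have : x ∈ Function.support f := h
    rw [hfs] at this
    exact hx (interior_subset this)
  have hfc : HasCompactSupport f := HasCompactSupport.intro hL hfL
  have hgc : HasCompactSupport (fun x => (f x : ℂ)) :=
    HasCompactSupport.intro hL (fun x hx => by simp [hfL x hx])
  have hg : ContDiff ℝ ∞ (fun x => (f x : ℂ)) := Complex.ofRealCLM.contDiff.comp hf'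
  have key := tarry_bound ν (hgc.toSchwartzMap hg) t ht0 hint
  have e1 : ∫ x, (hgc.toSchwartzMap hg) x ∂ν = ((∫ x, f x ∂ν : ℝ) : ℂ) := by
    exact integral_ofReal (𝕜 := ℂ) (f := f) (μ := ν)
  have e2 : ∫ x, ‖(hgc.toSchwartzMap hg) x‖ ^ 2 = ∫ x, f x ^ 2 := by
    congr 1; ext x; simp
  rw [e1, e2, ← hC] at key
  have hfi : Integrable f ν := hf'.continuous.integrable_of_hasCompactSupport hfc
  have l1 : 3 / 4 ≤ ∫ x, f x ∂ν := by
    have : (3:ℝ)/4 ≤ ν.real T := by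
      rw [measureReal_def]
      exact (ENNReal.ofReal_le_iff_le_toReal (measure_ne_top _ _)).1 hνT.le
    refine this.trans ?_
    rw [← integral_indicator_one hT.measurableSet]
    refine integral_mono ((integrable_const _).indicator hT.measurableSet) hfi fun x => ?_
    by_cases hx : x ∈ T
    · simp [hx, (hfT x).1 hx]
    · simp [hx, (hf01 x).1]
  have l2 : ∫ x, f x ^ 2 ≤ 1 / (4 * t) := by
    have hUfin : volume U ≠ ⊤ := (hU.trans ENNReal.ofReal_lt_top).ne
    have : volume.real U ≤ 1 / (4 * t) := by
      rw [measureReal_def]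
      exact ENNReal.toReal_le_of_le_ofReal (by positivity) hU.le
    refine le_trans ?_ this
    rw [← integral_indicator_one hUo.measurableSet]
    refine integral_mono_of_nonneg (Filter.Eventually.of_forall fun _ => sq_nonneg _)
      ((integrable_indicator_iff hUo.measurableSet).2 (integrableOn_const hUfin))
      (Filter.Eventually.of_forall fun x => ?_)
    by_cases hx : x ∈ U
    · simp only [hx, Set.indicator_of_mem, Pi.one_apply]
      exact pow_le_one₀ (hf01 x).1 (hf01 x).2
    · simp [hx, hfL x (fun h => hx (hLU h))]
  have l3 : t * ∫ x, f x ^ 2 ≤ 1 / 4 := by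
    calc t * ∫ x, f x ^ 2 ≤ t * (1 / (4 * t)) := by gcongr
      _ = 1 / 4 := by field_simp
  have l4 : C / t ≤ 1 / 2 := by
    rw [div_le_iff₀ ht0]; linarith
  rw [Complex.norm_real, Real.norm_eq_abs] at key
  have := le_abs_self (∫ x, f x ∂ν)
  linarith

/-- the null set -/
lemma tarry_null (r N : ℕ) (K : Fin N → Fin r → ℕ) (k : ℕ)
    (hkρ : k * Matrix.rank (Matrix.of fun (j : Fin N) (i : Fin r) => (K j i : ℝ)) < N) :
    ∃ S : Set (Fin N → ℝ), volume S = 0 ∧ ∀ x : Fin k → Fin r → ℝ, (∀ m i, 0 < x m i) →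
      (fun j => ∑ m, ∏ i, x m i ^ K j i) ∈ S := by
  set A := Matrix.of fun (j : Fin N) (i : Fin r) => (K j i : ℝ) with hA
  let F : (Fin k → LinearMap.range A.mulVecLin) → (Fin N → ℝ) :=
    fun y j => ∑ m, Real.exp ((y m : Fin N → ℝ) j)
  have hF : ContDiff ℝ 1 F := by
    rw [contDiff_pi]
    intro j
    refine ContDiff.sum fun m _ => Real.contDiff_exp.comp ?_
    have : ContDiff ℝ 1 (((ContinuousLinearMap.proj j : (Fin N → ℝ) →L[ℝ] ℝ).comp
      (Submodule.subtypeL (LinearMap.range A.mulVecLin))).comp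
        (ContinuousLinearMap.proj m : (Fin k → LinearMap.range A.mulVecLin) →L[ℝ] _)) :=
      ContinuousLinearMap.contDiff _
    exact this
  refine ⟨Set.range F, ?_, fun x hx => ?_⟩
  · have h1 := hF.dimH_range_le
    have h2 : Module.finrank ℝ (Fin k → LinearMap.range A.mulVecLin) < N := by
      rw [Module.finrank_pi_fintype]
      simpa [Matrix.rank] using hkρ
    rw [← hausdorffMeasure_pi_real]
    have := hausdorffMeasure_of_dimH_lt (s := Set.range F) (d := (N : NNReal))
      (h1.trans_lt (by exact_mod_cast h2))
    simpa using this
  · refine ⟨fun m => ⟨A.mulVecLin (fun i => Real.log (x m i)), ⟨_, rfl⟩⟩, ?_⟩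
    ext j
    refine Finset.sum_congr rfl fun m _ => ?_
    simp only [Matrix.mulVecLin_apply, Matrix.mulVec, dotProduct, hA, Matrix.of_apply]
    rw [Real.exp_sum]
    refine Finset.prod_congr rfl fun i _ => ?_
    rw [← Real.log_pow, Real.exp_log (pow_pos (hx m i) _)]

theorem tarry_diverges_of_k_rank_lt
    (r N : ℕ) (hr : 1 ≤ r) (hN : 1 ≤ N)
    (K : Fin N → Fin r → ℕ)
    (hdist : Function.Injective K)
    (hpos : ∀ j : Fin N, 0 < ∑ i : Fin r, K j i)
    (ρ : ℕ) (hρ : ρ = Matrix.rank (Matrix.of fun (j : Fin N) (i : Fin r) => (K j i : ℝ)))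
    (k : ℕ) (hk : 0 < k) (hkρ : k * ρ < N) :
    ¬ Integrable (tarryIntegrand r N K k) (volume : Measure (Fin N → ℝ)) := by
  intro hI
  subst hρ
  obtain ⟨S, hS, hxS⟩ := tarry_null r N K k hkρ
  let μ : Measure (Fin r → ℝ) := volume.restrict (Set.Icc 0 1)
  have hμ : IsProbabilityMeasure μ := ⟨by simp [μ, Real.volume_Icc_pi]⟩
  let P : Measure (Fin k → Fin r → ℝ) := Measure.pi fun _ => μ
  let G : (Fin k → Fin r → ℝ) → EuclideanSpace ℝ (Fin N) :=
    fun x => WithLp.toLp 2 (fun j => ∑ m, ∏ i, x m i ^ K j i)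
  have hG : Continuous G := by fun_prop
  have : IsProbabilityMeasure (P.map G) := Measure.isProbabilityMeasure_map hG.aemeasurable
  have hμpos : ∀ᵐ y ∂μ, ∀ i, 0 < y i := by
    rw [ae_all_iff]
    intro i
    have h0 : ∀ᵐ y : Fin r → ℝ, y i ≠ 0 := by
      have := Measure.ae_eval_ne (fun _ : Fin r => (volume : Measure ℝ)) i 0
      exact this
    filter_upwards [ae_restrict_of_ae h0, ae_restrict_mem measurableSet_Icc] with y h1 h2
    exact lt_of_le_of_ne (h2.1 i) (Ne.symm h1)
  have hPpos : ∀ᵐ x ∂P, ∀ m i, 0 < x m i := by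
    rw [ae_all_iff]
    intro m
    exact (Measure.quasiMeasurePreserving_eval (fun _ : Fin k => μ) m).ae hμpos
  obtain ⟨S', hSS', hS'm, hS'⟩ := exists_measurable_superset_of_null hS
  have hmp := PiLp.volume_preserving_ofLp (Fin N)
  refine tarry_ac (P.map G) (WithLp.ofLp ⁻¹' S') ?_ ?_ ?_
  · rw [hmp.measure_preimage hS'm.nullMeasurableSet, hS']
  · refine (ae_map_iff hG.aemeasurable (hmp.measurable hS'm)).2 ?_
    filter_upwards [hPpos] with x hx
    exact hSS' (hxS x hx)
  · have hI2 : Integrable (tarryIntegrand r N K k ∘ (WithLp.ofLp (p := 2) (V := Fin N → ℝ))) :=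
      hmp.integrable_comp_of_integrable hI
    refine hI2.congr (Filter.Eventually.of_forall fun α => ?_)
    simp only [Function.comp, tarryIntegrand]
    rw [integral_map hG.aemeasurable (Continuous.aestronglyMeasurable (by fun_prop)),
      mul_comm 2 k, pow_mul, ← norm_pow]
    congr 2
    have := integral_fintype_prod_eq_pow (𝕜 := ℂ) (ι := Fin k) (μ := μ)
      (fun x => Complex.exp (2 * Real.pi * Complex.I *
        ((∑ j : Fin N, α j * ∏ i : Fin r, x i ^ K j i : ℝ) : ℂ)))
    rw [Fintype.card_fin] at this
    rw [← this]
    congr 1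
    ext x
    rw [← Complex.exp_sum, Real.fourierChar_apply, ← Finset.mul_sum, ← Complex.ofReal_sum]
    have : ∑ m, ∑ j : Fin N, α j * ∏ i : Fin r, x m i ^ K j i = inner ℝ α (G x) := by
      rw [Finset.sum_comm]
      simp [G, PiLp.inner_apply, Finset.mul_sum, mul_comm]
    rw [this]
    congr 1
    push_cast
    ring
end

section
/- Let r ≥ 1 and m ≥ 1 be integers and consider the polynomial F_α(x) = Σ_{j=1}^m α_j (x_1·x_2⋯x_r)^j for α ∈ ℝ^m. If k is a positive integer with 2k > m(m+1)/2 + 1, then the special integral θ_k converges, i.e. the function α ↦ |∫_{[0,1]^r} exp(2πi F_α(x)) dx|^{2k} is Lebesgue integrable on ℝ^m. -/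
open MeasureTheory

theorem tp_vdc (p : Polynomial ℝ) (c d l : ℝ) (hcd : c ≤ d) (hl : 0 < l)
    (h1 : ∀ x ∈ Set.Icc c d, l ≤ |p.derivative.eval x|)
    (h2 : (∀ x ∈ Set.Icc c d, 0 ≤ p.derivative.derivative.eval x) ∨
      (∀ x ∈ Set.Icc c d, p.derivative.derivative.eval x ≤ 0)) :
    ‖∫ x in c..d, Complex.exp (2 * Real.pi * Complex.I * ((p.eval x : ℝ) : ℂ))‖ ≤ 1 / l := by
  have hpi := Real.pi_gt_three
  set q := p.derivative with hq
  have hne : ∀ x ∈ Set.Icc c d, q.eval x ≠ 0 := fun x hx h => by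
    have := h1 x hx; rw [h] at this; simp at this; linarith
  have hK : (2 * Real.pi * Complex.I : ℂ) ≠ 0 := by
    simp [Real.pi_ne_zero]
  have hKn : ‖(2 * Real.pi * Complex.I : ℂ)‖ = 2 * Real.pi := by
    simp [abs_of_pos Real.pi_pos]
  set K : ℂ := 2 * Real.pi * Complex.I with hKdef
  -- real reciprocal derivative
  have hw : ∀ x ∈ Set.uIcc c d, HasDerivAt (fun x => (q.eval x)⁻¹)
      (-(q.derivative.eval x) / (q.eval x)^2) x := fun x hx => by
    rw [Set.uIcc_of_le hcd] at hx
    exact (q.hasDerivAt x).inv (hne x hx)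
  have hwc : ContinuousOn (fun x => -(q.derivative.eval x) / (q.eval x)^2) (Set.uIcc c d) := by
    rw [Set.uIcc_of_le hcd]
    refine ContinuousOn.div (by fun_prop) (by fun_prop) ?_
    intro x hx; exact pow_ne_zero _ (hne x hx)
  have hu : ∀ x ∈ Set.uIcc c d, HasDerivAt (fun x => (((q.eval x)⁻¹ : ℝ) : ℂ))
      (((-(q.derivative.eval x) / (q.eval x)^2 : ℝ)) : ℂ) x := fun x hx => (hw x hx).ofReal_comp
  have hv : ∀ x ∈ Set.uIcc c d, HasDerivAt (fun x => Complex.exp (K * ((p.eval x : ℝ) : ℂ)) / K)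
      (Complex.exp (K * ((p.eval x : ℝ) : ℂ)) * (K * ((q.eval x : ℝ) : ℂ)) / K) x := fun x hx =>
    (((p.hasDerivAt x).ofReal_comp.const_mul K).cexp).div_const K
  have hexp : Continuous (fun x : ℝ => Complex.exp (K * ((p.eval x : ℝ) : ℂ))) := by fun_prop
  have hu' : IntervalIntegrable (fun x => (((-(q.derivative.eval x) / (q.eval x)^2 : ℝ)) : ℂ)) volume c d :=
    (Complex.continuous_ofReal.comp_continuousOn hwc).intervalIntegrable
  have hv' : IntervalIntegrable (fun x => (Complex.exp (K * ((p.eval x : ℝ) : ℂ)) * (K * ((q.eval x : ℝ) : ℂ)) / K)) volume c d := by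
    apply Continuous.intervalIntegrable; fun_prop
  have key := intervalIntegral.integral_mul_deriv_eq_deriv_mul hu hv hu' hv'
  have e1 : ∫ x in c..d, Complex.exp (K * ((p.eval x : ℝ) : ℂ)) =
      ∫ x in c..d, (((q.eval x)⁻¹ : ℝ) : ℂ) * (Complex.exp (K * ((p.eval x : ℝ) : ℂ)) * (K * ((q.eval x : ℝ) : ℂ)) / K) := by
    apply intervalIntegral.integral_congr
    intro x hx
    rw [Set.uIcc_of_le hcd] at hx
    have : ((q.eval x : ℝ) : ℂ) ≠ 0 := by exact_mod_cast hne x hx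
    simp only [Complex.ofReal_inv]
    field_simp
  have hen : ∀ x, ‖Complex.exp (K * ((p.eval x : ℝ) : ℂ)) / K‖ = 1 / (2 * Real.pi) := fun x => by
    rw [norm_div, hKn, Complex.norm_exp]
    simp [hKdef]
  rw [e1, key]
  have hb : ∀ x ∈ Set.Icc c d, |(q.eval x)⁻¹| ≤ 1 / l := fun x hx => by
    rw [abs_inv, ← one_div]; exact one_div_le_one_div_of_le hl (h1 x hx)
  have hint : ∫ x in c..d, |-(q.derivative.eval x) / (q.eval x)^2| ≤ 2 / l := by
    have hftc := intervalIntegral.integral_eq_sub_of_hasDerivAt hw hwc.intervalIntegrable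
    have hbd := abs_le.1 (hb d (Set.right_mem_Icc.2 hcd))
    have hbc := abs_le.1 (hb c (Set.left_mem_Icc.2 hcd))
    have e2 : 2 / l = 1 / l + 1 / l := by ring
    rcases h2 with h2 | h2
    · have : ∫ x in c..d, |-(q.derivative.eval x) / (q.eval x)^2| =
          ∫ x in c..d, -(-(q.derivative.eval x) / (q.eval x)^2) := by
        apply intervalIntegral.integral_congr
        intro x hx
        rw [Set.uIcc_of_le hcd] at hx
        simp only
        rw [abs_of_nonpos]
        exact div_nonpos_of_nonpos_of_nonneg (by linarith [h2 x hx]) (sq_nonneg _)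
      rw [this, intervalIntegral.integral_neg, hftc]; linarith
    · have : ∫ x in c..d, |-(q.derivative.eval x) / (q.eval x)^2| =
          ∫ x in c..d, (-(q.derivative.eval x) / (q.eval x)^2) := by
        apply intervalIntegral.integral_congr
        intro x hx
        rw [Set.uIcc_of_le hcd] at hx
        simp only
        rw [abs_of_nonneg]
        exact div_nonneg (by linarith [h2 x hx]) (sq_nonneg _)
      rw [this, hftc]; linarith
  have hI : ‖∫ x in c..d, (((-(q.derivative.eval x) / (q.eval x)^2 : ℝ)) : ℂ) *
      (Complex.exp (K * ((p.eval x : ℝ) : ℂ)) / K)‖ ≤ (2 / l) * (1 / (2 * Real.pi)) := by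
    refine (intervalIntegral.norm_integral_le_integral_norm hcd).trans ?_
    have : (fun x => ‖(((-(q.derivative.eval x) / (q.eval x)^2 : ℝ)) : ℂ) *
      (Complex.exp (K * ((p.eval x : ℝ) : ℂ)) / K)‖) = fun x =>
        |-(q.derivative.eval x) / (q.eval x)^2| * (1 / (2 * Real.pi)) := by
      funext x; rw [norm_mul, hen, Complex.norm_real, Real.norm_eq_abs]
    rw [this, intervalIntegral.integral_mul_const]
    gcongr
  have hB : ∀ x ∈ Set.Icc c d, ‖(((q.eval x)⁻¹ : ℝ) : ℂ) * (Complex.exp (K * ((p.eval x : ℝ) : ℂ)) / K)‖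
      ≤ (1 / l) * (1 / (2 * Real.pi)) := fun x hx => by
    rw [norm_mul, hen, Complex.norm_real, Real.norm_eq_abs]
    gcongr; exact hb x hx
  refine (norm_sub_le _ _).trans ?_
  refine (add_le_add (norm_sub_le _ _) le_rfl).trans ?_
  refine (add_le_add (add_le_add (hB d (Set.right_mem_Icc.2 hcd)) (hB c (Set.left_mem_Icc.2 hcd))) hI).trans ?_
  have : 1 / l * (1 / (2 * Real.pi)) + 1 / l * (1 / (2 * Real.pi)) + 2 / l * (1 / (2 * Real.pi)) = (2 / Real.pi) * (1/l) := by
    field_simp; norm_num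
  rw [this]
  have h3 : 2 / Real.pi ≤ 1 := by rw [div_le_one Real.pi_pos]; linarith
  have : 0 < 1 / l := by positivity
  nlinarith

theorem tp_sign (p : Polynomial ℝ) (c d : ℝ) (hcd : c < d)
    (h : ∀ x ∈ Set.Ioo c d, x ∉ p.roots.toFinset) :
    (∀ x ∈ Set.Icc c d, 0 ≤ p.eval x) ∨ (∀ x ∈ Set.Icc c d, p.eval x ≤ 0) := by
  by_cases hp : p = 0
  · left; simp [hp]
  have h0 : ∀ x ∈ Set.Ioo c d, p.eval x ≠ 0 := fun x hx h' => h x hx (by simp [hp, h'])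
  have hcl : closure (Set.Ioo c d) = Set.Icc c d := closure_Ioo hcd.ne
  have : (∀ x ∈ Set.Ioo c d, 0 ≤ p.eval x) ∨ (∀ x ∈ Set.Ioo c d, p.eval x ≤ 0) := by
    by_contra hcon
    push Not at hcon
    obtain ⟨⟨x, hx, hx'⟩, y, hy, hy'⟩ := hcon
    have := isPreconnected_Ioo.intermediate_value hx hy (f := fun x => p.eval x) (by fun_prop)
    obtain ⟨z, hz, hz'⟩ := this ⟨hx'.le, hy'.le⟩
    exact h0 z hz hz'
  rcases this with h | h
  · left
    rw [← hcl]
    exact fun x hx => closure_minimal (s := Set.Ioo c d) (t := {x | 0 ≤ p.eval x}) h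
      (isClosed_le continuous_const (by fun_prop)) hx
  · right
    rw [← hcl]
    exact fun x hx => closure_minimal (s := Set.Ioo c d) (t := {x | p.eval x ≤ 0}) h
      (isClosed_le (by fun_prop) continuous_const) hx

theorem tp_split (g : ℝ → ℂ) (hg : Continuous g) (S : Finset ℝ) : ∀ (B : ℝ), 0 ≤ B → 
    (∀ c d, 0 ≤ c → c < d → d ≤ 1 → (∀ x ∈ Set.Ioo c d, x ∉ S) → ‖∫ x in c..d, g x‖ ≤ B) →
    ∀ c d, 0 ≤ c → c < d → d ≤ 1 → ‖∫ x in c..d, g x‖ ≤ 2 ^ S.card * B := by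
  classical
  induction S using Finset.induction_on with
  | empty => intro B hB h c d hc hcd hd; simpa using h c d hc hcd hd (by simp)
  | insert s S hs ih =>
    intro B hB h c d hc hcd hd
    rw [Finset.card_insert_of_notMem hs, pow_succ, mul_assoc]
    refine ih (2 * B) (by positivity) ?_ c d hc hcd hd
    intro c d hc hcd hd hS
    by_cases hsm : s ∈ Set.Ioo c d
    · rw [← intervalIntegral.integral_add_adjacent_intervals
        (hg.intervalIntegrable c s) (hg.intervalIntegrable s d), two_mul]
      refine (norm_add_le _ _).trans (add_le_add ?_ ?_)
      · refine h _ _ hc hsm.1 (by linarith [hsm.2]) fun x hx => ?_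
        simp only [Finset.mem_insert, not_or]
        exact ⟨hx.2.ne, hS x ⟨hx.1, hx.2.trans hsm.2⟩⟩
      · refine h _ _ (by linarith [hsm.1]) hsm.2 hd fun x hx => ?_
        simp only [Finset.mem_insert, not_or]
        exact ⟨hx.1.ne', hS x ⟨hsm.1.trans hx.1, hx.2⟩⟩
    · refine (h c d hc hcd hd fun x hx => ?_).trans (by linarith)
      simp only [Finset.mem_insert, not_or]
      exact ⟨fun h => hsm (h ▸ hx), hS x hx⟩

theorem tp_main (p : Polynomial ℝ) (m : ℕ) (hp : p.natDegree ≤ m) (N : ℕ) (hN : 0 < N)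
    (h : ∀ i < N, ∃ x ∈ Set.Icc ((i : ℝ) / N) ((i + 1) / N), (N : ℝ) < |p.derivative.eval x|) :
    ‖∫ x in (0:ℝ)..1, Complex.exp (2 * Real.pi * Complex.I * ((p.eval x : ℝ) : ℂ))‖
      ≤ 2 ^ (3 * m + 1) / N := by
  classical
  have hN' : (0:ℝ) < N := by exact_mod_cast hN
  set q := p.derivative with hq
  have hqd : q.natDegree ≤ m := (Polynomial.natDegree_derivative_le p).trans (by omega)
  have hqd' : q.derivative.natDegree ≤ m := (Polynomial.natDegree_derivative_le q).trans (by omega)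
  set S := (q - Polynomial.C (N:ℝ)).roots.toFinset ∪ (q + Polynomial.C (N:ℝ)).roots.toFinset ∪
    q.derivative.roots.toFinset with hS
  have hroots : ∀ p : Polynomial ℝ, p.natDegree ≤ m → p.roots.toFinset.card ≤ m := fun p hp =>
    (Multiset.toFinset_card_le _).trans ((Polynomial.card_roots' p).trans hp)
  have hcard : S.card ≤ 3 * m := by
    have h1 := hroots (q - Polynomial.C (N:ℝ)) (by rw [Polynomial.natDegree_sub_C]; exact hqd)
    have h2 := hroots (q + Polynomial.C (N:ℝ)) (by rw [Polynomial.natDegree_add_C]; exact hqd)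
    have h3 := hroots _ hqd'
    have h4 := Finset.card_union_le ((q - Polynomial.C (N:ℝ)).roots.toFinset ∪ (q + Polynomial.C (N:ℝ)).roots.toFinset) q.derivative.roots.toFinset
    have h5 := Finset.card_union_le (q - Polynomial.C (N:ℝ)).roots.toFinset (q + Polynomial.C (N:ℝ)).roots.toFinset
    rw [hS]
    omega
  have := tp_split (fun x => Complex.exp (2 * Real.pi * Complex.I * ((p.eval x : ℝ) : ℂ)))
    (by fun_prop) S (2 / N) (by positivity) ?_ 0 1 le_rfl one_pos le_rfl
  · refine this.trans ?_
    rw [pow_succ, mul_div_assoc]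
    gcongr
    norm_num
  intro c d hc hcd hd hfree
  have f1 := tp_sign (q - Polynomial.C (N:ℝ)) c d hcd (fun x hx h' => hfree x hx (by simp only [hS, Finset.mem_union]; tauto))
  have f2 := tp_sign (q + Polynomial.C (N:ℝ)) c d hcd (fun x hx h' => hfree x hx (by simp only [hS, Finset.mem_union]; tauto))
  have f3 := tp_sign (q.derivative) c d hcd (fun x hx h' => hfree x hx (by simp only [hS, Finset.mem_union]; tauto))
  simp only [Polynomial.eval_sub, Polynomial.eval_add, Polynomial.eval_C] at f1 f2
  have hle : (1:ℝ) / N ≤ 2 / N := by gcongr; norm_num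
  rcases f1 with f1 | f1
  · refine (tp_vdc p c d N hcd.le hN' (fun x hx => ?_) f3).trans hle
    exact (by linarith [f1 x hx] : (N:ℝ) ≤ q.eval x).trans (le_abs_self _)
  rcases f2 with f2 | f2
  swap
  · refine (tp_vdc p c d N hcd.le hN' (fun x hx => ?_) f3).trans hle
    exact (by linarith [f2 x hx] : (N:ℝ) ≤ -q.eval x).trans (neg_le_abs _)
  have hlen : d - c ≤ 2 / N := by
    by_contra hcon
    push Not at hcon
    have hcon' : 2 < (d - c) * N := by rwa [div_lt_iff₀ hN'] at hcon
    have c1 := Nat.le_ceil (c * N)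
    have c2 := Nat.ceil_lt_add_one (show 0 ≤ c * N by positivity)
    have hdN : d * N ≤ N := by nlinarith
    obtain ⟨x, hx, hx'⟩ := h ⌈c * N⌉₊ (by
      have : (⌈c * N⌉₊ : ℝ) < N := by nlinarith
      exact_mod_cast this)
    have hxm : x ∈ Set.Icc c d := by
      constructor
      · refine le_trans ?_ hx.1
        rw [le_div_iff₀ hN']; exact c1
      · refine hx.2.trans ?_
        rw [div_le_iff₀ hN']; nlinarith
    have : |q.eval x| ≤ N := abs_le.2 ⟨by linarith [f2 x hxm], by linarith [f1 x hxm]⟩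
    linarith
  have := intervalIntegral.norm_integral_le_of_norm_le_const (a := c) (b := d) (C := 1)
    (f := fun x => Complex.exp (2 * Real.pi * Complex.I * ((p.eval x : ℝ) : ℂ))) (fun x _ => by
      rw [Complex.norm_exp]; simp)
  rw [abs_of_pos (by linarith), one_mul] at this
  exact this.trans hlen

noncomputable def tpP (m : ℕ) (α : Fin m → ℝ) : Polynomial ℝ :=
  ∑ j : Fin m, Polynomial.C (α j) * Polynomial.X ^ ((j : ℕ) + 1)

noncomputable def tpJ (m : ℕ) (α : Fin m → ℝ) : ℂ :=
  ∫ x in (0:ℝ)..1, Complex.exp (2 * Real.pi * Complex.I *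
    ((∑ j : Fin m, α j * x ^ ((j : ℕ) + 1) : ℝ) : ℂ))

theorem tpP_eval (m : ℕ) (α : Fin m → ℝ) (x : ℝ) :
    (tpP m α).eval x = ∑ j : Fin m, α j * x ^ ((j : ℕ) + 1) := by
  simp [tpP, Polynomial.eval_finsetSum]

theorem tpP_deriv (m : ℕ) (α : Fin m → ℝ) (x : ℝ) :
    (tpP m α).derivative.eval x = ∑ j : Fin m, α j * (((j : ℕ) + 1) * x ^ (j : ℕ)) := by
  simp [tpP, Polynomial.eval_finsetSum]

theorem tpP_deg (m : ℕ) (α : Fin m → ℝ) : (tpP m α).natDegree ≤ m := by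
  unfold tpP
  refine Polynomial.natDegree_sum_le_of_forall_le _ _ fun j _ => ?_
  exact (Polynomial.natDegree_C_mul_X_pow_le _ _).trans j.2

theorem tp_norm (t : ℝ) : ‖Complex.exp (2 * Real.pi * Complex.I * (t : ℂ))‖ = 1 := by
  rw [Complex.norm_exp]; simp

theorem tpJ_norm_le (m : ℕ) (α : Fin m → ℝ) : ‖tpJ m α‖ ≤ 1 := by
  have := intervalIntegral.norm_integral_le_of_norm_le_const (a := (0:ℝ)) (b := 1) (C := 1)
    (f := fun x : ℝ => Complex.exp (2 * Real.pi * Complex.I *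
      ((∑ j : Fin m, α j * x ^ ((j : ℕ) + 1) : ℝ) : ℂ))) (fun x _ => (tp_norm _).le)
  simpa [tpJ] using this

theorem tpJ_meas (m : ℕ) : StronglyMeasurable (tpJ m) := by
  unfold tpJ
  simp_rw [intervalIntegral.integral_of_le zero_le_one]
  apply StronglyMeasurable.integral_prod_right
  apply Continuous.stronglyMeasurable
  unfold Function.uncurry
  fun_prop

/-- `D = 1 + 2 + ... + m`. -/
def tpD (m : ℕ) : ℕ := ∑ j : Fin m, ((j : ℕ) + 1)

theorem tpD_eq (m : ℕ) : (tpD m : ℝ) = m * (m + 1) / 2 := by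
  unfold tpD
  rw [Fin.sum_univ_eq_sum_range (fun j => j + 1)]
  induction m with
  | zero => simp
  | succ n ih => rw [Finset.sum_range_succ, Nat.cast_add, ih]; push_cast; ring

theorem tp_vol (m : ℕ) : ∃ K : ENNReal, K ≠ ⊤ ∧ ∀ N : ℕ, 0 < N → ∀ i : ℕ,
    volume {α : Fin m → ℝ | ∀ x ∈ Set.Icc ((i : ℝ) / N) ((i + 1) / N),
      |(tpP m α).derivative.eval x| ≤ N} ≤ K * (N : ENNReal) ^ tpD m := by
  classical
  set y : Fin m → ℝ := fun s => (s : ℝ) / m with hy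
  have hyinj : Function.Injective y := by
    intro a b hab
    have hm : (m : ℝ) ≠ 0 := by
      have := a.pos; positivity
    simp only [hy] at hab
    field_simp at hab
    exact Fin.ext (by exact_mod_cast hab)
  set κ : ℝ := (Matrix.vandermonde y).det * ∏ j : Fin m, (((j : ℕ) : ℝ) + 1) with hκ
  have hκ0 : κ ≠ 0 := by
    refine mul_ne_zero (Matrix.det_vandermonde_ne_zero_iff.2 hyinj) ?_
    exact Finset.prod_ne_zero_iff.2 fun j _ => by positivity
  refine ⟨ENNReal.ofReal |κ⁻¹| * volume (Set.Icc (-1 : Fin m → ℝ) 1), ?_, ?_⟩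
  · exact ENNReal.mul_ne_top ENNReal.ofReal_ne_top isCompact_Icc.measure_lt_top.ne
  intro N hN i
  have hN' : (0:ℝ) < N := by exact_mod_cast hN
  set M : Matrix (Fin m) (Fin m) ℝ := Matrix.vandermonde (fun s => y s + i) *
    Matrix.diagonal (fun j : Fin m => (((j : ℕ) : ℝ) + 1) * ((N : ℝ)⁻¹) ^ ((j : ℕ) + 1)) with hM
  have hdet : M.det = κ * ((N : ℝ)⁻¹) ^ tpD m := by
    rw [hM, Matrix.det_mul, Matrix.det_vandermonde_add, Matrix.det_diagonal,
      Finset.prod_mul_distrib, Finset.prod_pow_eq_pow_sum, hκ, tpD]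
    ring
  have hdet0 : LinearMap.det (Matrix.toLin' M) ≠ 0 := by
    rw [LinearMap.det_toLin', hdet]; positivity
  have hsub : {α : Fin m → ℝ | ∀ x ∈ Set.Icc ((i : ℝ) / N) ((i + 1) / N),
      |(tpP m α).derivative.eval x| ≤ N} ⊆ (Matrix.toLin' M) ⁻¹' (Set.Icc (-1 : Fin m → ℝ) 1) := by
    intro α hα
    have hval : ∀ s, |Matrix.toLin' M α s| ≤ 1 := by
      intro s
      have hs : 0 ≤ y s ∧ y s ≤ 1 := by
        have hm : (0:ℝ) < m := by
          have := s.pos; positivity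
        refine ⟨by positivity, ?_⟩
        simp only [hy]
        rw [div_le_one hm]
        exact_mod_cast s.2.le
      have h1 := hα ((y s + i) / N) ⟨by gcongr; linarith, by rw [add_comm]; gcongr; linarith⟩
      rw [tpP_deriv] at h1
      have : Matrix.toLin' M α s =
          (∑ j : Fin m, α j * (((j : ℕ) + 1) * ((y s + i) / N) ^ (j : ℕ))) / N := by
        rw [Matrix.toLin'_apply, Matrix.mulVec, dotProduct, Finset.sum_div]
        refine Finset.sum_congr rfl fun j _ => ?_
        rw [hM, Matrix.mul_diagonal, Matrix.vandermonde_apply, div_pow, inv_pow, pow_succ]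
        field_simp
      rw [this, abs_div, abs_of_pos hN', div_le_one hN']
      exact h1
    exact ⟨fun s => (abs_le.1 (hval s)).1, fun s => (abs_le.1 (hval s)).2⟩
  refine (measure_mono hsub).trans ?_
  rw [Measure.addHaar_preimage_linearMap _ hdet0, LinearMap.det_toLin', hdet, mul_inv, abs_mul,
    ENNReal.ofReal_mul (abs_nonneg _)]
  have : ENNReal.ofReal |(((N : ℝ)⁻¹) ^ tpD m)⁻¹| = (N : ENNReal) ^ tpD m := by
    rw [inv_pow, inv_inv, abs_of_nonneg (by positivity), ENNReal.ofReal_pow hN'.le,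
      ENNReal.ofReal_natCast]
  rw [this]
  apply le_of_eq; ring

theorem tp_one (m k : ℕ) (hk : tpD m + 1 < 2 * k) :
    ∫⁻ α : Fin m → ℝ, ‖tpJ m α‖ₑ ^ (2 * k) ≠ ⊤ := by
  obtain ⟨K, hK, hvol⟩ := tp_vol m
  set C : ℝ := 2 ^ (3 * m + 1) with hC
  have hC1 : 1 ≤ C := one_le_pow₀ (by norm_num)
  have hC0 : 0 < C := by positivity
  set E : ℕ → Set (Fin m → ℝ) := fun n => {α | C / 2 ^ (n + 1) < ‖tpJ m α‖} with hE
  have hEm : ∀ n, MeasurableSet (E n) := fun n =>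
    measurableSet_lt measurable_const (tpJ_meas m).norm.measurable
  have hEv : ∀ n, volume (E n) ≤ K * ENNReal.ofReal ((2 ^ (n + 1)) ^ (tpD m + 1)) := by
    intro n
    have hsub : E n ⊆ ⋃ i ∈ Finset.range (2 ^ (n + 1)), {α : Fin m → ℝ |
        ∀ x ∈ Set.Icc ((i : ℝ) / (2 ^ (n + 1) : ℕ)) ((i + 1) / (2 ^ (n + 1) : ℕ)),
        |(tpP m α).derivative.eval x| ≤ (2 ^ (n + 1) : ℕ)} := by
      intro α hα
      by_contra hcon
      simp only [Set.mem_iUnion, Finset.mem_range, Set.mem_ofPred_eq, not_exists] at hcon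
      have := tp_main (tpP m α) m (tpP_deg m α) (2 ^ (n + 1)) (by positivity) (fun i hi => by
        have := hcon i hi
        push Not at this
        exact this)
      simp_rw [tpP_eval] at this
      have h2 : C / 2 ^ (n + 1) < ‖tpJ m α‖ := hα
      rw [tpJ] at h2
      push_cast at this h2
      linarith
    refine (measure_mono hsub).trans ((measure_biUnion_finset_le _ _).trans ?_)
    refine (Finset.sum_le_sum fun i _ => hvol _ (by positivity) i).trans ?_
    rw [Finset.sum_const, Finset.card_range, nsmul_eq_mul, ENNReal.ofReal_pow (by positivity)]
    have : ENNReal.ofReal (2 ^ (n + 1)) = ((2 ^ (n + 1) : ℕ) : ENNReal) := by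
      rw [← ENNReal.ofReal_natCast]; push_cast; rfl
    rw [this, pow_succ]
    apply le_of_eq; ring
  have hpt : ∀ α, ‖tpJ m α‖ₑ ^ (2 * k) ≤
      ∑' n, (E n).indicator (fun _ => ENNReal.ofReal ((C / 2 ^ n) ^ (2 * k))) α := by
    intro α
    by_cases h0 : ‖tpJ m α‖ = 0
    · have : ‖tpJ m α‖ₑ = 0 := by simpa using h0
      rw [this, zero_pow (by omega)]
      exact zero_le
    have hpos : 0 < ‖tpJ m α‖ := lt_of_le_of_ne (norm_nonneg _) (Ne.symm h0)
    have hex : ∃ n : ℕ, C / 2 ^ (n + 1) < ‖tpJ m α‖ := by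
      obtain ⟨n, hn⟩ := pow_unbounded_of_one_lt (C / ‖tpJ m α‖) (one_lt_two)
      refine ⟨n, ?_⟩
      rw [div_lt_iff₀ hpos] at hn
      rw [div_lt_iff₀ (by positivity), pow_succ]
      nlinarith [pow_pos (two_pos (α := ℝ)) n]
    classical
    have hn1 := Nat.find_spec hex
    have hn2 : ‖tpJ m α‖ ≤ C / 2 ^ (Nat.find hex) := by
      rcases Nat.eq_zero_or_pos (Nat.find hex) with h | h
      · rw [h]; simpa using (tpJ_norm_le m α).trans hC1
      · have := Nat.find_min hex (Nat.sub_lt h one_pos)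
        rw [show Nat.find hex - 1 + 1 = Nat.find hex by omega] at this
        exact not_lt.1 this
    refine le_trans ?_ (ENNReal.le_tsum (Nat.find hex))
    rw [Set.indicator_of_mem (show α ∈ E _ from hn1), ← ofReal_norm, ← ENNReal.ofReal_pow (norm_nonneg _)]
    exact ENNReal.ofReal_le_ofReal (pow_le_pow_left₀ (norm_nonneg _) hn2 _)
  refine ne_top_of_le_ne_top ?_ (lintegral_mono hpt)
  rw [lintegral_tsum (fun n => (measurable_const.indicator (hEm n)).aemeasurable)]
  have hterm : ∀ n, ∫⁻ α, (E n).indicator (fun _ => ENNReal.ofReal ((C / 2 ^ n) ^ (2 * k))) α ≤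
      K * ENNReal.ofReal (C ^ (2 * k) * 2 ^ (tpD m + 1) * (1 / 2) ^ n) := by
    intro n
    rw [lintegral_indicator_const (hEm n)]
    refine (mul_le_mul_right (hEv n) _).trans ?_
    rw [mul_left_comm, ← ENNReal.ofReal_mul (by positivity)]
    refine mul_le_mul_right (ENNReal.ofReal_le_ofReal ?_) _
    have h2 : ((2:ℝ) ^ n) ^ (tpD m + 2) ≤ (2 ^ n) ^ (2 * k) :=
      pow_le_pow_right₀ (one_le_pow₀ (by norm_num)) (by omega)
    rw [div_pow, pow_succ (2:ℝ) n, mul_pow, one_div, inv_pow]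
    have h3 : ((2:ℝ) ^ n) ^ (tpD m + 1) / (2 ^ n) ^ (2 * k) ≤ (2 ^ n)⁻¹ := by
      rw [div_le_iff₀ (by positivity), inv_mul_eq_div, le_div_iff₀ (by positivity), ← pow_succ]
      exact h2
    calc _ = C ^ (2 * k) * 2 ^ (tpD m + 1) * (((2:ℝ) ^ n) ^ (tpD m + 1) / (2 ^ n) ^ (2 * k)) := by ring
      _ ≤ _ := by gcongr
  refine ne_top_of_le_ne_top ?_ (ENNReal.tsum_le_tsum hterm)
  rw [ENNReal.tsum_mul_left]
  refine ENNReal.mul_ne_top hK ?_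
  have hs : Summable (fun n : ℕ => C ^ (2 * k) * 2 ^ (tpD m + 1) * (1 / 2 : ℝ) ^ n) :=
    (summable_geometric_of_lt_one (by norm_num) (by norm_num)).mul_left _
  exact hs.tsum_ofReal_ne_top

theorem tp_restrict (s : ℕ) : (volume : Measure (Fin s → ℝ)).restrict (Set.Icc 0 1) =
    Measure.pi (fun _ : Fin s => (volume : Measure ℝ).restrict (Set.Ioc 0 1)) := by
  have h : (volume : Measure ℝ).restrict (Set.Ioc 0 1) = volume.restrict (Set.Icc 0 1) :=
    Measure.restrict_congr_set Ioc_ae_eq_Icc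
  rw [h, ← Measure.restrict_pi_pi, ← volume_pi]
  congr 1
  ext x; simp [Pi.le_def, forall_and]

theorem tp_ae (s : ℕ) : ∀ᵐ y ∂(volume : Measure (Fin s → ℝ)).restrict (Set.Icc 0 1),
    0 < ∏ i, y i := by
  rw [tp_restrict, ← Measure.restrict_pi_pi]
  filter_upwards [ae_restrict_mem (MeasurableSet.univ_pi fun _ => measurableSet_Ioc)] with y hy
  exact Finset.prod_pos fun i _ => (hy i (Set.mem_univ i)).1

theorem tp_int (s : ℕ) (b : ℝ) (hb : -1 < b) :
    ∫⁻ y in Set.Icc (0 : Fin s → ℝ) 1, ENNReal.ofReal ((∏ i, y i) ^ b) ≠ ⊤ := by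
  have h1 : Integrable (fun t : ℝ => t ^ b) (volume.restrict (Set.Ioc 0 1)) := by
    have := intervalIntegral.intervalIntegrable_rpow' (a := 0) (b := 1) hb
    rwa [intervalIntegrable_iff_integrableOn_Ioc_of_le zero_le_one] at this
  have h2 : Integrable (fun y : Fin s → ℝ => ∏ i, (y i) ^ b)
      (Measure.pi (fun _ : Fin s => (volume : Measure ℝ).restrict (Set.Ioc 0 1))) :=
    Integrable.fintype_prod (f := fun _ t => t ^ b) fun _ => h1
  rw [← tp_restrict] at h2
  refine ne_top_of_le_ne_top h2.lintegral_lt_top.ne (le_of_eq ?_)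
  refine setLIntegral_congr_fun measurableSet_Icc fun y hy => ?_
  rw [Real.finset_prod_rpow _ _ fun i _ => hy.1 i]

theorem tp_scale (m : ℕ) (h : (Fin m → ℝ) → ENNReal) (hh : Measurable h) (c : ℝ) (hc : 0 < c) :
    ENNReal.ofReal (c ^ tpD m) * ∫⁻ α : Fin m → ℝ, h (fun j => α j * c ^ ((j : ℕ) + 1)) =
      ∫⁻ α, h α := by
  classical
  set L := Matrix.toLin' (Matrix.diagonal (fun j : Fin m => c ^ ((j : ℕ) + 1))) with hL
  have hdet : LinearMap.det L = c ^ tpD m := by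
    rw [hL, LinearMap.det_toLin', Matrix.det_diagonal, Finset.prod_pow_eq_pow_sum, tpD]
  have hpos : 0 < c ^ tpD m := by positivity
  have hmap := Measure.map_linearMap_addHaar_eq_smul_addHaar (volume : Measure (Fin m → ℝ))
    (f := L) (by rw [hdet]; exact hpos.ne')
  have hLf : ∀ α, L α = fun j => α j * c ^ ((j : ℕ) + 1) := fun α => by
    funext j
    rw [hL, Matrix.toLin'_apply, Matrix.mulVec_diagonal, mul_comm]
  have h1 : ∫⁻ α : Fin m → ℝ, h (fun j => α j * c ^ ((j : ℕ) + 1)) = ∫⁻ α, h α ∂(Measure.map L volume) := by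
    rw [lintegral_map hh (L.continuous_of_finiteDimensional.measurable)]
    simp_rw [hLf]
  rw [h1, hmap, lintegral_smul_measure, hdet, smul_eq_mul, ← mul_assoc, ← ENNReal.ofReal_mul hpos.le,
    abs_of_pos (by positivity), mul_inv_cancel₀ hpos.ne', ENNReal.ofReal_one, one_mul]

theorem tp_fubini (s m : ℕ) (α : Fin m → ℝ) :
    ∫ x in Set.Icc (0 : Fin (s + 1) → ℝ) 1, Complex.exp (2 * Real.pi * Complex.I *
      ((∑ j : Fin m, α j * (∏ i : Fin (s + 1), x i) ^ ((j : ℕ) + 1) : ℝ) : ℂ)) =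
    ∫ y in Set.Icc (0 : Fin s → ℝ) 1, tpJ m (fun j => α j * (∏ i, y i) ^ ((j : ℕ) + 1)) := by
  have hmp := volume_preserving_piFinSuccAbove (fun _ : Fin (s + 1) => ℝ) 0
  set e := MeasurableEquiv.piFinSuccAbove (fun _ : Fin (s + 1) => ℝ) 0 with he
  have hset : Set.Icc (0 : Fin (s + 1) → ℝ) 1 =
      e ⁻¹' (Set.Icc (0:ℝ) 1 ×ˢ Set.Icc (0 : Fin s → ℝ) 1) := by
    ext x
    simp only [Set.mem_preimage, Set.mem_prod, Set.mem_Icc, Pi.le_def, Fin.forall_fin_succ]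
    simp [he, MeasurableEquiv.piFinSuccAbove, Fin.insertNthEquiv, Fin.removeNth, Fin.tail]
    tauto
  set g : ℝ × (Fin s → ℝ) → ℂ := fun z => Complex.exp (2 * Real.pi * Complex.I *
      ((∑ j : Fin m, α j * (z.1 * ∏ i, z.2 i) ^ ((j : ℕ) + 1) : ℝ) : ℂ)) with hg
  have hgc : Continuous g := by fun_prop
  have hfg : ∀ x : Fin (s + 1) → ℝ, Complex.exp (2 * Real.pi * Complex.I *
      ((∑ j : Fin m, α j * (∏ i : Fin (s + 1), x i) ^ ((j : ℕ) + 1) : ℝ) : ℂ)) = g (e x) := by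
    intro x
    simp only [hg, Fin.prod_univ_succ]
    simp [he, MeasurableEquiv.piFinSuccAbove, Fin.insertNthEquiv, Fin.removeNth, Fin.tail]
  simp_rw [hfg]
  rw [hset, hmp.setIntegral_preimage_emb e.measurableEmbedding g, Measure.volume_eq_prod,
    ← Measure.prod_restrict, integral_prod_symm]
  · refine integral_congr_ae (Filter.Eventually.of_forall fun y => ?_)
    simp only [tpJ, hg]
    rw [intervalIntegral.integral_of_le zero_le_one, integral_Icc_eq_integral_Ioc]
    congr 1
    funext t
    congr 3
    refine Finset.sum_congr rfl fun j _ => ?_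
    rw [mul_pow]; ring
  · rw [Measure.prod_restrict]
    exact hgc.continuousOn.integrableOn_compact (isCompact_Icc.prod isCompact_Icc)

theorem tp_holder {Y : Type*} [MeasurableSpace Y] (μ : Measure Y) (w : Y → ℝ) (hw : Measurable w)
    (hpos : ∀ᵐ y ∂μ, 0 < w y) (G : Y → ℂ) (hGm : Measurable G) (D k : ℕ) (P q : ℝ)
    (hP : P = 2 * k) (hP0 : 0 < P) (hPq : P.HolderConjugate q) :
    ‖‖∫ y, G y ∂μ‖ ^ (2 * k)‖ₑ ≤
      (∫⁻ y, ENNReal.ofReal (w y ^ D) * ‖G y‖ₑ ^ (2 * k) ∂μ) *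
        (∫⁻ y, ENNReal.ofReal (w y ^ (-(D / P) * q)) ∂μ) ^ (P / q) := by
  have hq0 : 0 < q := hPq.symm.pos
  have hol := ENNReal.lintegral_mul_le_Lp_mul_Lq μ hPq
    (f := fun y => ENNReal.ofReal (w y ^ (D / P)) * ‖G y‖ₑ)
    (g := fun y => ENNReal.ofReal (w y ^ (-(D / P))))
    (by fun_prop) (by fun_prop)
  have e1 : ∫⁻ y, ((fun y => ENNReal.ofReal (w y ^ (D / P)) * ‖G y‖ₑ) *
      (fun y => ENNReal.ofReal (w y ^ (-(D / P))))) y ∂μ = ∫⁻ y, ‖G y‖ₑ ∂μ := by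
    refine lintegral_congr_ae ?_
    filter_upwards [hpos] with y hy
    simp only [Pi.mul_apply]
    rw [mul_right_comm, ← ENNReal.ofReal_mul (by positivity), ← Real.rpow_add hy]
    simp
  have hpow : ∀ x : ENNReal, x ^ P = x ^ (2 * k) := fun x => by
    rw [hP, ← ENNReal.rpow_natCast]; push_cast; rfl
  have e2 : ∫⁻ y, (ENNReal.ofReal (w y ^ (D / P)) * ‖G y‖ₑ) ^ P ∂μ =
      ∫⁻ y, ENNReal.ofReal (w y ^ D) * ‖G y‖ₑ ^ (2 * k) ∂μ := by
    refine lintegral_congr_ae ?_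
    filter_upwards [hpos] with y hy
    rw [ENNReal.mul_rpow_of_nonneg _ _ hP0.le, ENNReal.ofReal_rpow_of_nonneg (by positivity) hP0.le,
      ← Real.rpow_mul hy.le, div_mul_cancel₀ _ hP0.ne', Real.rpow_natCast, hpow]
  have e3 : ∫⁻ y, (ENNReal.ofReal (w y ^ (-(D / P)))) ^ q ∂μ =
      ∫⁻ y, ENNReal.ofReal (w y ^ (-(D / P) * q)) ∂μ := by
    refine lintegral_congr_ae ?_
    filter_upwards [hpos] with y hy
    rw [ENNReal.ofReal_rpow_of_nonneg (by positivity) hq0.le, ← Real.rpow_mul hy.le]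
  rw [e1, e2, e3] at hol
  have h1 := (enorm_integral_le_lintegral_enorm (μ := μ) G).trans hol
  rw [enorm_pow, enorm_norm]
  have h2 := ENNReal.rpow_le_rpow h1 hP0.le
  rw [ENNReal.mul_rpow_of_nonneg _ _ hP0.le, ← ENNReal.rpow_mul, ← ENNReal.rpow_mul,
    one_div_mul_cancel hP0.ne', ENNReal.rpow_one, one_div_mul_eq_div, hpow] at h2
  exact h2

/-- The dilation `α ↦ (α_j c^j)`, with `c` the product of the coordinates of `y`. -/
def tpS (s m : ℕ) (α : Fin m → ℝ) (y : Fin s → ℝ) : Fin m → ℝ :=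
  fun j => α j * (∏ i, y i) ^ ((j : ℕ) + 1)

theorem tpS_cont (s m : ℕ) : Continuous (fun z : (Fin m → ℝ) × (Fin s → ℝ) => tpS s m z.1 z.2) := by
  unfold tpS
  fun_prop

theorem tp_Jm (s m : ℕ) : Measurable (fun z : (Fin m → ℝ) × (Fin s → ℝ) => tpJ m (tpS s m z.1 z.2)) :=
  (tpJ_meas m).measurable.comp (tpS_cont s m).measurable

theorem tp_Jm2 (s m : ℕ) (α : Fin m → ℝ) : Measurable (fun y : (Fin s → ℝ) => tpJ m (tpS s m α y)) := by
  have h : Continuous (fun y : Fin s → ℝ => tpS s m α y) := by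
    unfold tpS
    fun_prop
  exact (tpJ_meas m).measurable.comp h.measurable

theorem tp_prodm (s : ℕ) : Measurable (fun y : Fin s → ℝ => ∏ i, y i) := by
  have h : Continuous (fun y : Fin s → ℝ => ∏ i, y i) := by fun_prop
  exact h.measurable

theorem tp_reduced (s m k : ℕ) (hDk : tpD m + 1 < 2 * k) :
    Integrable (fun α : Fin m → ℝ => ‖∫ y in Set.Icc (0 : Fin s → ℝ) 1,
      tpJ m (tpS s m α y)‖ ^ (2 * k)) (volume : Measure (Fin m → ℝ)) := by
  have hone := tp_one m k hDk
  have hineq : (tpD m : ℝ) + 1 < 2 * k := by exact_mod_cast hDk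
  have hae := tp_ae s
  have hint := tp_int s
  have hfin : (volume.restrict (Set.Icc (0 : Fin s → ℝ) 1)) Set.univ < ⊤ := by
    rw [Measure.restrict_apply_univ]
    exact isCompact_Icc.measure_lt_top
  have hsf : SFinite (volume.restrict (Set.Icc (0 : Fin s → ℝ) 1)) := inferInstance
  generalize volume.restrict (Set.Icc (0 : Fin s → ℝ) 1) = μ at *
  have hJm := tp_Jm s m
  have hsm : StronglyMeasurable (fun α : Fin m → ℝ => ∫ y, tpJ m (tpS s m α y) ∂μ) :=
    StronglyMeasurable.integral_prod_right' hJm.stronglyMeasurable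
  refine ⟨(hsm.norm.pow _).aestronglyMeasurable, ?_⟩
  rw [hasFiniteIntegral_iff_enorm]
  obtain ⟨P, hP⟩ : ∃ P : ℝ, P = 2 * k := ⟨_, rfl⟩
  rw [← hP] at hineq
  have hD0 : (0:ℝ) ≤ tpD m := by positivity
  have hP1 : 1 < P := by linarith
  have hP0 : 0 < P := by linarith
  obtain ⟨q, hq⟩ : ∃ q : ℝ, q = P / (P - 1) := ⟨_, rfl⟩
  have hPq : P.HolderConjugate q := hq ▸ Real.HolderConjugate.conjExponent hP1
  have hq0 : 0 < q := hPq.symm.pos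
  have hAfin : ∫⁻ y, ENNReal.ofReal ((∏ i, y i) ^ (-(tpD m / P) * q)) ∂μ ≠ ⊤ := by
    refine hint _ ?_
    have : -(tpD m / P) * q = -(tpD m / (P - 1)) := by
      have : P - 1 ≠ 0 := by linarith
      rw [hq]; field_simp
    rw [this, neg_lt_neg_iff, div_lt_one (by linarith)]
    linarith
  have hprodm := tp_prodm s
  have hbound := fun α : Fin m → ℝ => tp_holder μ (fun y => ∏ i, y i) hprodm hae
    (fun y => tpJ m (tpS s m α y)) (tp_Jm2 s m α) (tpD m) k P q hP hP0 hPq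
  refine (lintegral_mono hbound).trans_lt ?_
  have hAt := ENNReal.rpow_ne_top_of_nonneg (y := P / q) (by positivity) hAfin
  rw [lintegral_mul_const' _ _ hAt]
  refine ENNReal.mul_lt_top ?_ hAt.lt_top
  rw [lintegral_lintegral_swap (by
    apply Measurable.aemeasurable
    exact ((hprodm.comp measurable_snd).pow_const _).ennreal_ofReal.mul (hJm.enorm.pow_const _))]
  have e4 : ∫⁻ y, (∫⁻ α : Fin m → ℝ, ENNReal.ofReal ((∏ i, y i) ^ tpD m) *
        ‖tpJ m (tpS s m α y)‖ₑ ^ (2 * k)) ∂μ =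
      ∫⁻ y, (∫⁻ α : Fin m → ℝ, ‖tpJ m α‖ₑ ^ (2 * k)) ∂μ := by
    refine lintegral_congr_ae ?_
    filter_upwards [hae] with y hy
    rw [lintegral_const_mul' _ _ ENNReal.ofReal_ne_top]
    exact tp_scale m (fun α => ‖tpJ m α‖ₑ ^ (2 * k)) ((tpJ_meas m).measurable.enorm.pow_const _) _ hy
  rw [e4, lintegral_const]
  exact ENNReal.mul_lt_top hone.lt_top hfin

theorem tarry_product_polynomial_converges (r m : ℕ) (hr : 1 ≤ r) (hm : 1 ≤ m)
    (k : ℕ) (hk : 0 < k)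
    (hineq : (2 * k : ℝ) > m * (m + 1) / 2 + 1) :
    Integrable
      (fun α : Fin m → ℝ =>
        ‖∫ x in Set.Icc (0 : Fin r → ℝ) 1,
            Complex.exp (2 * Real.pi * Complex.I *
              ((∑ j : Fin m, α j * (∏ i : Fin r, x i) ^ ((j : ℕ) + 1) : ℝ) : ℂ))‖ ^ (2 * k))
      (volume : Measure (Fin m → ℝ)) := by
  obtain ⟨s, rfl⟩ : ∃ s, r = s + 1 := ⟨r - 1, by omega⟩
  rw [← tpD_eq] at hineq
  have hDk : tpD m + 1 < 2 * k := by exact_mod_cast hineq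
  have h := tp_reduced s m k hDk
  have e : ∀ α : Fin m → ℝ, _ := fun α => tp_fubini s m α
  simp only [e]
  exact h
end
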